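/- Let A be a finite-dimensional nilpotent associative algebra over ℂ. Then t(A) = 6 if and only if A is an extra special algebra of dimension 3. -/

import Mathlib

/-!
Write `n = dim A`, `d = dim A²` and `q = n - d`, and let `Z` be the space of cocycles, so that
`t(A) = n² - dim Z + d` (`tInv_eq`). The bilinear forms on `A / A²`, pulled back to `A`, are
cocycles and form a space of dimension `q²`.

Every finite-dimensional algebra has a zero power or contains a nonzero idempotent
(`nilpotent_or_idempotent`), and the two alternatives are treated separately.

*Nilpotent algebras.* For a cocycle `f` the elements `a` with `f(a, ·) = 0` form a right ideal, and
a right ideal `K` with `K + A² = A` is all of `A`. Hence `f` is determined by its restriction to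
`V × A` for a complement `V` of `A²`, so that `dim Z ≤ q n` and `t(A) ≥ d (n + 1)`. If `d = 1`,
spanned by a product `y₀w₀`, the number `f(y₀w₀, w₀)` decides whether `f` comes from `A / A²`, whence
`dim Z ≤ q² + 1`. With `dim Z ≥ q²` these bounds turn `t(A) = 6` into `d = 1`, `n = 3`, `dim Z = 4`:
every cocycle comes from `A / A²`. The derived ideal is then central, and if the center were larger,
it would be the kernel of a functional `g`, the product would be a multiple of `g(x) g(y)`, and the
symmetrised product of `g` with a functional that is nonzero on `A²` would be one cocycle too many
(`extraSpecial_of_tInv_eq_six`).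

*Algebras with an idempotent `e ≠ 0`.* Modulo coboundaries a cocycle is determined by its
restrictions to `A(1-e) × (1-e)A` and `(1-e)Ae × eA(1-e)`. Counting dimensions of Peirce components
gives `dim M(A) ≤ (n - 1)²`, that is, `t(A) ≥ 2n - 1`. So `t(A) = 6` forces `n = 3` and
`dim M(A) = 3`, which is only possible if `e` is central and `C = (1-e)A(1-e)` has dimension two.
If `C² = 0` then `dim M(A) ≥ 4`; if `C² ≠ 0` then `dim M(A) ≤ dim M(C) ≤ 1`. Both are absurd
(`tInv_ne_six_of_idempotent`).

*Conversely*, in an extra special algebra of dimension three every cocycle comes from `A / A²`, since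
for any other cocycle `f` the kernel of `f(·, y₀w₀)`, of dimension at least two, would lie in the
center; hence `t(A) = 9 - 4 + 1 = 6` (`tInv_eq_six_of_extraSpecial`).
-/

open Module

noncomputable section Defs

variable (A : Type*) [NonUnitalRing A] [Module ℂ A]

/-- `A` is nilpotent: there is an `n` such that every product of `n` elements of `A`
is zero (by associativity it suffices to consider left-normed products). -/
def IsNilpotentAlgebra : Prop :=
  ∃ n : ℕ, ∀ (x : A) (l : List A), l.length + 1 = n → l.foldl (· * ·) x = 0

/-- The derived ideal `A' = AA`: the linear span of all products in `A`. -/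
def derivedIdeal : Submodule ℂ A :=
  Submodule.span ℂ {a : A | ∃ x y : A, x * y = a}

/-- The space of 2-cocycles: bilinear maps `f : A × A → ℂ` with `f(xy,z) = f(x,yz)`. -/
def Cocycles : Submodule ℂ (A →ₗ[ℂ] A →ₗ[ℂ] ℂ) where
  carrier := {f | ∀ x y z : A, f (x * y) z = f x (y * z)}
  add_mem' := by
    intro f g hf hg x y z
    simp [hf x y z, hg x y z]
  zero_mem' := by
    intro x y z
    simp
  smul_mem' := by
    intro c f hf x y z
    simp [hf x y z]

/-- The space of 2-coboundaries: bilinear maps of the form `f(x,y) = g(xy)`. -/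
def Coboundaries : Submodule ℂ (A →ₗ[ℂ] A →ₗ[ℂ] ℂ) where
  carrier := {f | ∃ g : A →ₗ[ℂ] ℂ, ∀ x y : A, f x y = g (x * y)}
  add_mem' := by
    rintro f₁ f₂ ⟨g₁, h₁⟩ ⟨g₂, h₂⟩
    exact ⟨g₁ + g₂, fun x y => by simp [h₁ x y, h₂ x y]⟩
  zero_mem' := ⟨0, by simp⟩
  smul_mem' := by
    rintro c f ⟨g, h⟩
    exact ⟨c • g, fun x y => by simp [h x y]⟩

/-- The dimension of the multiplier `M(A) = H²(A, ℂ)`, the quotient of the cocycles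
by the coboundaries. -/
def multDim : ℕ :=
  Module.finrank ℂ ((Cocycles A).map (Coboundaries A).mkQ)

/-- `t(A) = (dim A)² - dim M(A)`. -/
def tInv : ℤ :=
  (Module.finrank ℂ A : ℤ) ^ 2 - (multDim A : ℤ)

/-- A (two-sided) ideal of `A`. -/
def IsIdealOf (I : Submodule ℂ A) : Prop :=
  ∀ a : A, ∀ x ∈ I, a * x ∈ I ∧ x * a ∈ I

/-- `A ≅ J₁ ⊕ A(k)`: `A` has a basis `x, z, a₁, …, a_k` whose only nonzero
product of basis vectors is `x·x = z`. -/
def IsJ1SumAbelian (k : ℕ) : Prop :=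
  ∃ b : Basis (Fin (k + 2)) ℂ A,
    b 0 * b 0 = b 1 ∧ ∀ i j : Fin (k + 2), ¬(i = 0 ∧ j = 0) → b i * b j = 0

/-- `A ≅ J₁`: `A` has a basis `x, z` with only nonzero product `x·x = z`. -/
def IsJ1 : Prop := IsJ1SumAbelian A 0

/-- `A ≅ C₃`: `A` has a basis `x, z, z'` with only nonzero products
`x·x = z`, `x·z = z·x = z'`. -/
def IsC3 : Prop :=
  ∃ b : Basis (Fin 3) ℂ A,
    b 0 * b 0 = b 1 ∧ b 0 * b 1 = b 2 ∧ b 1 * b 0 = b 2 ∧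
    b 0 * b 2 = 0 ∧ b 2 * b 0 = 0 ∧ b 1 * b 1 = 0 ∧ b 1 * b 2 = 0 ∧
    b 2 * b 1 = 0 ∧ b 2 * b 2 = 0

variable [SMulCommClass ℂ A A] [IsScalarTower ℂ A A]

/-- The center `Z(A) = {z : za = az = 0 for all a}`. -/
def centerSub : Submodule ℂ A where
  carrier := {z | ∀ a : A, z * a = 0 ∧ a * z = 0}
  add_mem' := by
    intro x y hx hy a
    constructor
    · rw [add_mul, (hx a).1, (hy a).1, add_zero]
    · rw [mul_add, (hx a).2, (hy a).2, add_zero]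
  zero_mem' := by
    intro a
    simp
  smul_mem' := by
    intro c x hx a
    constructor
    · rw [smul_mul_assoc, (hx a).1, smul_zero]
    · rw [mul_smul_comm, (hx a).2, smul_zero]

/-- `A` is extra special: `Z(A) = A'` and `dim Z(A) = 1`. -/
def IsExtraSpecialAlg : Prop :=
  centerSub A = derivedIdeal A ∧ Module.finrank ℂ (centerSub A) = 1

/-- `A ≅ E ⊕ A(k)` for some extra special algebra `E` of dimension `n`:
`A` decomposes as an internal direct sum of a subalgebra `E` which is extra special
of dimension `n` and a central subspace `Z` of dimension `k` all of whose products
with `A` vanish. -/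
def HasExtraSpecialDecomp (n k : ℕ) : Prop :=
  ∃ (E : NonUnitalSubalgebra ℂ A) (Z : Submodule ℂ A),
    IsCompl E.toSubmodule Z ∧ (∀ z ∈ Z, ∀ a : A, z * a = 0 ∧ a * z = 0) ∧
    IsExtraSpecialAlg ↥E ∧ Module.finrank ℂ ↥E = n ∧ Module.finrank ℂ ↥Z = k

end Defs

/-! ### Cocycles, coboundaries and forms on `A / A²` -/

section Tools

variable {A : Type*} [NonUnitalRing A] [Module ℂ A]

/-- Pullback of bilinear forms on `A` along two linear maps. -/
def pullForm {A U V : Type*} [AddCommGroup A] [Module ℂ A] [AddCommGroup U] [Module ℂ U]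
    [AddCommGroup V] [Module ℂ V] (φ : U →ₗ[ℂ] A) (ψ : V →ₗ[ℂ] A) :
    (A →ₗ[ℂ] A →ₗ[ℂ] ℂ) →ₗ[ℂ] (U →ₗ[ℂ] V →ₗ[ℂ] ℂ) where
  toFun f := f.compl₁₂ φ ψ
  map_add' f g := by ext; simp
  map_smul' c f := by ext; simp

@[simp] lemma pullForm_apply {A U V : Type*} [AddCommGroup A] [Module ℂ A] [AddCommGroup U]
    [Module ℂ U] [AddCommGroup V] [Module ℂ V] (φ : U →ₗ[ℂ] A) (ψ : V →ₗ[ℂ] A)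
    (f : A →ₗ[ℂ] A →ₗ[ℂ] ℂ) (u : U) (v : V) : pullForm φ ψ f u v = f (φ u) (ψ v) := rfl

/-- The bilinear forms on `A` that vanish as soon as one argument lies in `W`. -/
def vanishForms {A : Type*} [AddCommGroup A] [Module ℂ A] (W : Submodule ℂ A) :
    Submodule ℂ (A →ₗ[ℂ] A →ₗ[ℂ] ℂ) where
  carrier := {f | ∀ w ∈ W, ∀ a : A, f w a = 0 ∧ f a w = 0}
  add_mem' := by
    intro f g hf hg w hw a
    simp [hf w hw a, hg w hw a]
  zero_mem' := by simp
  smul_mem' := by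
    intro c f hf w hw a
    simp [hf w hw a]

/-- Rank–nullity for the restriction of a linear map to a subspace. -/
lemma finrank_le_of_ker_le {V W : Type*} [AddCommGroup V] [Module ℂ V] [AddCommGroup W]
    [Module ℂ W] [FiniteDimensional ℂ V] [FiniteDimensional ℂ W] (φ : V →ₗ[ℂ] W)
    (Z B : Submodule ℂ V)
    (S : Submodule ℂ W) (h1 : ∀ f ∈ Z, φ f ∈ S) (h2 : ∀ f ∈ Z, φ f = 0 → f ∈ B) :
    finrank ℂ Z ≤ finrank ℂ S + finrank ℂ B := by
  rw [← (φ.domRestrict Z).finrank_range_add_finrank_ker]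
  refine add_le_add (Submodule.finrank_mono ?_) ?_
  · rintro _ ⟨f, rfl⟩
    exact h1 f f.2
  · rw [← Submodule.finrank_map_subtype_eq]
    refine Submodule.finrank_mono ?_
    rintro _ ⟨f, hf, rfl⟩
    exact h2 f f.2 hf

lemma coboundaries_le_cocycles : Coboundaries A ≤ Cocycles A := by
  rintro f ⟨g, hg⟩ x y z
  rw [hg, hg, mul_assoc]

lemma mul_mem_derivedIdeal (x y : A) : x * y ∈ derivedIdeal A :=
  Submodule.subset_span ⟨x, y, rfl⟩

/-- Forms vanishing on the derived ideal in both arguments are cocycles. -/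
lemma vanishForms_le_cocycles : vanishForms (derivedIdeal A) ≤ Cocycles A := by
  intro f hf x y z
  rw [(hf _ (mul_mem_derivedIdeal x y) z).1, (hf _ (mul_mem_derivedIdeal y z) x).2]

lemma exists_generator (hd : finrank ℂ (derivedIdeal A) = 1) :
    ∃ y₀ w₀ : A, y₀ * w₀ ≠ 0 ∧ ∀ z ∈ derivedIdeal A, ∃ c : ℂ, z = c • (y₀ * w₀) := by
  have hex : ∃ y₀ w₀ : A, y₀ * w₀ ≠ 0 := by
    by_contra! h
    have : derivedIdeal A = ⊥ := by
      rw [eq_bot_iff]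
      refine Submodule.span_le.2 ?_
      rintro _ ⟨x, y, rfl⟩
      exact h x y
    rw [this, finrank_bot] at hd
    omega
  obtain ⟨y₀, w₀, h0⟩ := hex
  refine ⟨y₀, w₀, h0, fun z hz => ?_⟩
  have h1 := (finrank_eq_one_iff_of_nonzero'
    (⟨y₀ * w₀, mul_mem_derivedIdeal y₀ w₀⟩ : derivedIdeal A)
    (fun h => h0 (congrArg Subtype.val h))).1 hd ⟨z, hz⟩
  obtain ⟨c, hc⟩ := h1
  exact ⟨c, (congrArg Subtype.val hc).symm⟩

/-- If `A² = ℂ y₀w₀`, the single number `f(y₀w₀, w₀)` decides whether a cocycle `f` vanishes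
on `A²` in both arguments. -/
lemma mem_vanishForms_of_apply_eq_zero {y₀ w₀ : A}
    (hz : ∀ z ∈ derivedIdeal A, ∃ c : ℂ, z = c • (y₀ * w₀))
    {f : A →ₗ[ℂ] A →ₗ[ℂ] ℂ} (hf : f ∈ Cocycles A) (h0 : f (y₀ * w₀) w₀ = 0) :
    f ∈ vanishForms (derivedIdeal A) := by
  have h1 : ∀ x, f x (y₀ * w₀) = 0 := by
    intro x
    obtain ⟨c, hc⟩ := hz _ (mul_mem_derivedIdeal x y₀)
    rw [← hf, hc, map_smul, LinearMap.smul_apply, h0, smul_zero]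
  have h2 : ∀ x, f (y₀ * w₀) x = 0 := by
    intro x
    obtain ⟨c, hc⟩ := hz _ (mul_mem_derivedIdeal w₀ x)
    rw [hf, hc, map_smul, h1, smul_zero]
  intro w hw a
  obtain ⟨c, rfl⟩ := hz w hw
  rw [map_smul, LinearMap.smul_apply, h2, map_smul, h1, smul_zero]
  exact ⟨rfl, rfl⟩

variable [FiniteDimensional ℂ A]

/-- The forms vanishing on `W` are the pullbacks of the bilinear forms on `A / W`. -/
lemma finrank_vanishForms (W : Submodule ℂ A) :
    finrank ℂ (vanishForms W) = finrank ℂ (A ⧸ W) * finrank ℂ (A ⧸ W) := by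
  obtain ⟨s, hs⟩ := W.mkQ.exists_rightInverse_of_surjective W.range_mkQ
  have hs' : ∀ u, W.mkQ (s u) = u := fun u => LinearMap.congr_fun hs u
  have hsW : ∀ a, s (W.mkQ a) - a ∈ W := fun a => by
    have : s (W.mkQ a) - a ∈ W.mkQ.ker := by
      rw [LinearMap.mem_ker, map_sub, hs', sub_self]
    rwa [W.ker_mkQ] at this
  let e : vanishForms W ≃ₗ[ℂ] ((A ⧸ W) →ₗ[ℂ] (A ⧸ W) →ₗ[ℂ] ℂ) :=
    LinearEquiv.ofLinearMap ((pullForm s s).comp (vanishForms W).subtype)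
      ((pullForm W.mkQ W.mkQ).codRestrict (vanishForms W) (by
        intro f w hw a
        have : W.mkQ w = 0 := by rw [← LinearMap.mem_ker, W.ker_mkQ]; exact hw
        simp only [pullForm_apply, this, map_zero, LinearMap.zero_apply, and_self]))
      (by
        apply LinearMap.ext; intro f
        apply LinearMap.ext; intro u
        apply LinearMap.ext; intro v
        change f (W.mkQ (s u)) (W.mkQ (s v)) = f u v
        rw [hs', hs'])
      (by
        apply LinearMap.ext; rintro ⟨f, hf⟩
        apply Subtype.ext
        apply LinearMap.ext; intro u
        apply LinearMap.ext; intro v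
        change f (s (W.mkQ u)) (s (W.mkQ v)) = f u v
        have h1 := (hf _ (hsW u) (s (W.mkQ v))).1
        have h2 := (hf _ (hsW v) u).2
        rw [map_sub, LinearMap.sub_apply] at h1
        rw [map_sub] at h2
        linear_combination h1 + h2)
  rw [e.finrank_eq, finrank_linearMap, finrank_linearMap, finrank_self, mul_one]

lemma finrank_quot_derived :
    finrank ℂ (A ⧸ derivedIdeal A) + finrank ℂ (derivedIdeal A) = finrank ℂ A :=
  (derivedIdeal A).finrank_quotient_add_finrank

lemma sq_le_finrank_cocycles :
    finrank ℂ (A ⧸ derivedIdeal A) * finrank ℂ (A ⧸ derivedIdeal A) ≤ finrank ℂ (Cocycles A) := by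
  rw [← finrank_vanishForms]
  exact Submodule.finrank_mono vanishForms_le_cocycles

/-- If `dim A² = 1`, the forms coming from `A / A²` have codimension at most one in the space of
cocycles. -/
lemma finrank_cocycles_le_of_one (hd : finrank ℂ (derivedIdeal A) = 1) :
    finrank ℂ (Cocycles A) ≤
      finrank ℂ (A ⧸ derivedIdeal A) * finrank ℂ (A ⧸ derivedIdeal A) + 1 := by
  obtain ⟨y₀, w₀, h0, hz⟩ := exists_generator hd
  rw [← finrank_vanishForms, add_comm]
  let φ : (A →ₗ[ℂ] A →ₗ[ℂ] ℂ) →ₗ[ℂ] ℂ :=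
    (LinearMap.applyₗ w₀).comp (LinearMap.applyₗ (y₀ * w₀))
  have h := finrank_le_of_ker_le φ (Cocycles A) (vanishForms (derivedIdeal A)) ⊤
    (fun _ _ => trivial) (fun f hf h0 => mem_vanishForms_of_apply_eq_zero hz hf h0)
  rwa [finrank_top, finrank_self] at h

variable (A) [SMulCommClass ℂ A A] [IsScalarTower ℂ A A]

/-- The coboundaries are dual to the derived ideal. -/
lemma finrank_coboundaries : finrank ℂ (Coboundaries A) = finrank ℂ (derivedIdeal A) := by
  let φ : Dual ℂ A →ₗ[ℂ] (A →ₗ[ℂ] A →ₗ[ℂ] ℂ) :=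
    { toFun := fun g => (LinearMap.mul ℂ A).compr₂ g
      map_add' := fun g h => by ext; simp
      map_smul' := fun c g => by ext; simp }
  have hφ : ∀ g x y, φ g x y = g (x * y) := fun g x y => rfl
  have h1 : φ.range = Coboundaries A := by
    ext f
    constructor
    · rintro ⟨g, rfl⟩
      exact ⟨g, hφ g⟩
    · rintro ⟨g, hg⟩
      refine ⟨g, ?_⟩
      ext x y
      rw [hφ, hg]
  have h2 : φ.ker = (derivedIdeal A).dualAnnihilator := by
    ext g
    rw [LinearMap.mem_ker, Submodule.mem_dualAnnihilator]
    constructor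
    · intro h
      have : derivedIdeal A ≤ LinearMap.ker g := by
        refine Submodule.span_le.2 ?_
        rintro _ ⟨x, y, rfl⟩
        change g (x * y) = 0
        rw [← hφ, h]; rfl
      exact this
    · intro h
      ext x y
      exact h _ (mul_mem_derivedIdeal x y)
  have h3 := φ.finrank_range_add_finrank_ker
  rw [h1, h2, Subspace.dual_finrank_eq,
    ← Subspace.finrank_add_finrank_dualAnnihilator_eq (derivedIdeal A)] at h3
  exact Nat.add_right_cancel h3

lemma multDim_add : multDim A + finrank ℂ (derivedIdeal A) = finrank ℂ (Cocycles A) := by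
  have h := LinearMap.finrank_range_add_finrank_ker (K := ℂ) (V := Cocycles A)
    (V₂ := (A →ₗ[ℂ] A →ₗ[ℂ] ℂ) ⧸ Coboundaries A)
    ((Coboundaries A).mkQ.domRestrict (Cocycles A))
  rw [LinearMap.range_domRestrict] at h
  rw [← finrank_coboundaries, ← h, multDim]
  have hker : Submodule.map (Cocycles A).subtype
      ((Coboundaries A).mkQ.domRestrict (Cocycles A)).ker = Coboundaries A := by
    ext f
    constructor
    · rintro ⟨f, hf, rfl⟩
      exact (Submodule.Quotient.mk_eq_zero _).1 hf
    · intro hf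
      exact ⟨⟨f, coboundaries_le_cocycles hf⟩, (Submodule.Quotient.mk_eq_zero _).2 hf, rfl⟩
  have h5 := congrArg (fun S : Submodule ℂ (A →ₗ[ℂ] A →ₗ[ℂ] ℂ) => finrank ℂ S) hker
  simp only [Submodule.finrank_map_subtype_eq] at h5
  rw [h5]

variable {A}

/-- A linear map on bilinear forms which detects classes of cocycles modulo coboundaries
bounds the dimension of the multiplier. -/
lemma multDim_le {W : Type*} [AddCommGroup W] [Module ℂ W] [FiniteDimensional ℂ W]
    (φ : (A →ₗ[ℂ] A →ₗ[ℂ] ℂ) →ₗ[ℂ] W) (S : Submodule ℂ W)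
    (h1 : ∀ f ∈ Cocycles A, φ f ∈ S)
    (h2 : ∀ f ∈ Cocycles A, φ f = 0 → f ∈ Coboundaries A) : multDim A ≤ finrank ℂ S := by
  have := finrank_le_of_ker_le φ _ _ S h1 h2
  have h := multDim_add A
  rw [finrank_coboundaries] at this
  omega

end Tools

/-! ### Powers of an algebra and idempotents -/

section Powers

variable (A : Type*) [NonUnitalRing A] [Module ℂ A] [SMulCommClass ℂ A A] [IsScalarTower ℂ A A]

/-- The span of all products of `k + 1` elements of `A`, that is, the ideal `A^(k+1)`
(so that the sequence starts with `A` itself). -/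
def idealPow : ℕ → Submodule ℂ A
  | 0 => ⊤
  | k + 1 => Submodule.map₂ (LinearMap.mul ℂ A) (idealPow k) ⊤

lemma idealPow_one : idealPow A 1 = derivedIdeal A := by
  apply le_antisymm
  · exact Submodule.map₂_le.2 fun x _ y _ => mul_mem_derivedIdeal x y
  · refine Submodule.span_le.2 ?_
    rintro _ ⟨x, y, rfl⟩
    exact Submodule.apply_mem_map₂ (LinearMap.mul ℂ A) (p := ⊤) (q := ⊤) trivial trivial

lemma idealPow_succ_le (k : ℕ) : idealPow A (k + 1) ≤ idealPow A k := by
  induction k with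
  | zero => exact le_top
  | succ k ih => exact Submodule.map₂_le_map₂_left ih

lemma idealPow_eq_of_stable {k : ℕ} (h : idealPow A (k + 1) = idealPow A k) (j : ℕ) :
    idealPow A (k + j) = idealPow A k := by
  induction j with
  | zero => rfl
  | succ j ih =>
    rw [← add_assoc, idealPow, ih]
    exact h

variable {A}

/-- If a right ideal together with `A²` spans a nilpotent algebra, it is the whole algebra:
by induction it also spans `A` together with any higher power of `A`. -/
lemma eq_top_of_sup_derivedIdeal {k : ℕ} (hk : idealPow A k = ⊥) (K : Submodule ℂ A)
    (hK : ∀ x ∈ K, ∀ y, x * y ∈ K) (hs : K ⊔ derivedIdeal A = ⊤) : K = ⊤ := by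
  have key : ∀ j, K ⊔ idealPow A j = ⊤ := by
    intro j
    induction j with
    | zero => exact sup_top_eq _
    | succ j ih =>
      rw [← idealPow_one, idealPow, idealPow, ← ih, Submodule.map₂_sup_left] at hs
      rw [ih] at hs
      rw [eq_top_iff, ← hs, idealPow]
      refine sup_le le_sup_left (sup_le_sup_right ?_ _)
      exact Submodule.map₂_le.2 fun x hx y _ => hK x hx y
  simpa [hk] using key k

/-- Associativity `(ST)U = S(TU)` for products of subspaces. -/
lemma map₂_mul_assoc (S T U : Submodule ℂ A) :
    Submodule.map₂ (LinearMap.mul ℂ A) (Submodule.map₂ (LinearMap.mul ℂ A) S T) U =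
      Submodule.map₂ (LinearMap.mul ℂ A) S (Submodule.map₂ (LinearMap.mul ℂ A) T U) := by
  apply le_antisymm
  · refine Submodule.map₂_le.2 fun x hx u hu => ?_
    have : Submodule.map₂ (LinearMap.mul ℂ A) S T ≤
        (Submodule.map₂ (LinearMap.mul ℂ A) S
          (Submodule.map₂ (LinearMap.mul ℂ A) T U)).comap ((LinearMap.mul ℂ A).flip u) := by
      refine Submodule.map₂_le.2 fun s hs t ht => ?_
      rw [Submodule.mem_comap, LinearMap.flip_apply, LinearMap.mul_apply', LinearMap.mul_apply',
        mul_assoc]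
      exact Submodule.apply_mem_map₂ _ hs (Submodule.apply_mem_map₂ _ ht hu)
    exact this hx
  · refine Submodule.map₂_le.2 fun s hs x hx => ?_
    have : Submodule.map₂ (LinearMap.mul ℂ A) T U ≤
        (Submodule.map₂ (LinearMap.mul ℂ A) (Submodule.map₂ (LinearMap.mul ℂ A) S T)
          U).comap (LinearMap.mul ℂ A s) := by
      refine Submodule.map₂_le.2 fun t ht u hu => ?_
      rw [Submodule.mem_comap, LinearMap.mul_apply', LinearMap.mul_apply', ← mul_assoc]
      exact Submodule.apply_mem_map₂ _ (Submodule.apply_mem_map₂ _ hs ht) hu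
    exact this hx

variable [FiniteDimensional ℂ A]

/-- A right multiplication with a nonzero fixed vector forces a nonzero idempotent:
a suitable polynomial without constant term in `a` is idempotent (Fitting). -/
lemma exists_idempotent_of_fix {x a : A} (hx : x ≠ 0) (hxa : x * a = x) :
    ∃ e : A, e ≠ 0 ∧ e * e = e := by
  open Polynomial in
  have hfin : FiniteDimensional ℂ (Unitization ℂ A) :=
    Module.Finite.of_surjective (M := ℂ × A) (Unitization.linearEquiv ℂ ℂ A).symm.toLinearMap
      (LinearEquiv.surjective _)
  set u : Unitization ℂ A := (a : Unitization ℂ A) with hu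
  have hint : IsIntegral ℂ u := Algebra.IsIntegral.isIntegral u
  obtain ⟨q, hq, hXq⟩ := exists_eq_pow_rootMultiplicity_mul_and_not_dvd (minpoly ℂ u)
    (minpoly.ne_zero hint) 0
  set k := rootMultiplicity 0 (minpoly ℂ u)
  rw [C_0, sub_zero] at hq hXq
  have hcop : IsCoprime (X ^ (k + 1)) q :=
    ((irreducible_X.coprime_iff_not_dvd).2 hXq).pow_left
  obtain ⟨s, t, hst⟩ := hcop
  have hp : aeval u (X ^ k * q) = 0 := by rw [← hq]; exact minpoly.aeval ℂ u
  set E : Unitization ℂ A := aeval u (s * X ^ (k + 1)) with hE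
  have hfst : E.fst = 0 := by
    change Unitization.fstHom ℂ A E = 0
    rw [hE, ← aeval_algHom_apply]
    have : Unitization.fstHom ℂ A u = 0 := Unitization.fst_inr ℂ a
    rw [this]
    simp
  have hEsnd : E = (E.snd : Unitization ℂ A) := by
    ext
    · exact hfst
    · rfl
  have hxk : ∀ j : ℕ, (x : Unitization ℂ A) * u ^ j = x := by
    intro j
    induction j with
    | zero => rw [pow_zero, mul_one]
    | succ j ih => rw [pow_succ, ← mul_assoc, ih, hu, ← Unitization.inr_mul, hxa]
  refine ⟨E.snd, ?_, ?_⟩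
  · intro h0
    rw [h0, Unitization.inr_zero] at hEsnd
    have h1 : aeval u (t * q) = 1 := by
      rw [← zero_add (aeval u (t * q)), ← hEsnd, hE, ← map_add, hst, map_one]
    have h2 : u ^ k = 0 := by
      have : aeval u (X ^ k * (t * q)) = 0 := by
        rw [show X ^ k * (t * q) = t * (X ^ k * q) by ring, map_mul, hp, mul_zero]
      rw [map_mul, h1, mul_one, map_pow, aeval_X] at this
      exact this
    have h3 := hxk k
    rw [h2, mul_zero] at h3
    apply hx
    rw [← Unitization.snd_inr ℂ x, ← h3, Unitization.snd_zero]
  · have h1 : E * E = E := by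
      have h2 : aeval u (s * X ^ (k + 1) * (t * q)) = 0 := by
        rw [show s * X ^ (k + 1) * (t * q) = s * t * X * (X ^ k * q) by ring, map_mul, hp,
          mul_zero]
      have h3 : E * aeval u (s * X ^ (k + 1) + t * q) = E := by rw [hst, map_one, mul_one]
      rw [map_add, mul_add, ← hE] at h3
      rw [map_mul, ← hE] at h2
      rw [h2, add_zero] at h3
      exact h3
    rw [hEsnd, ← Unitization.inr_mul] at h1
    exact Unitization.inr_injective h1

/-- A finite-dimensional algebra is nilpotent or contains a nonzero idempotent. -/
lemma nilpotent_or_idempotent :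
    (∃ k, idealPow A k = ⊥) ∨ ∃ e : A, e ≠ 0 ∧ e * e = e := by
  by_cases hnil : ∃ k, idealPow A k = ⊥
  · exact Or.inl hnil
  right
  push Not at hnil
  have wf : WellFounded ((· < ·) : Submodule ℂ A → Submodule ℂ A → Prop) := wellFounded_lt
  -- the stable power `I` of `A`
  obtain ⟨_, ⟨k, rfl⟩, hmin⟩ := wf.has_min (Set.range (idealPow A)) ⟨_, 0, rfl⟩
  have hstab : idealPow A (k + 1) = idealPow A k :=
    (idealPow_succ_le A k).eq_of_not_lt (hmin _ ⟨k + 1, rfl⟩)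
  set I := idealPow A k with hI
  have hIj : ∀ j, Submodule.map₂ (LinearMap.mul ℂ A) I (idealPow A j) = I := by
    intro j
    induction j with
    | zero => exact hstab
    | succ j ih =>
      rw [idealPow, ← map₂_mul_assoc, ih]
      exact hstab
  have hII : Submodule.map₂ (LinearMap.mul ℂ A) I I = I := hIj k
  -- a minimal nonzero subspace `R` with `R I = R`
  obtain ⟨R, ⟨hR0, hRI⟩, hRmin⟩ := wf.has_min
    {R : Submodule ℂ A | R ≠ ⊥ ∧ Submodule.map₂ (LinearMap.mul ℂ A) R I = R} ⟨I, hnil k, hII⟩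
  obtain ⟨x, hxR, hx⟩ : ∃ x ∈ R, I.map (LinearMap.mul ℂ A x) ≠ ⊥ := by
    by_contra! hcon
    apply hR0
    rw [← hRI, eq_bot_iff]
    refine Submodule.map₂_le.2 fun x hx y hy => ?_
    rw [← hcon x hx]
    exact Submodule.mem_map_of_mem hy
  have hxle : I.map (LinearMap.mul ℂ A x) ≤ R := by
    rintro _ ⟨y, hy, rfl⟩
    rw [← hRI]
    exact Submodule.apply_mem_map₂ _ hxR hy
  have hxI : Submodule.map₂ (LinearMap.mul ℂ A) (I.map (LinearMap.mul ℂ A x)) I =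
      I.map (LinearMap.mul ℂ A x) := by
    apply le_antisymm
    · refine Submodule.map₂_le.2 ?_
      rintro _ ⟨y, hy, rfl⟩ z hz
      refine ⟨y * z, ?_, (mul_assoc x y z).symm⟩
      have := Submodule.apply_mem_map₂ (LinearMap.mul ℂ A) hy hz
      rwa [hII] at this
    · rw [Submodule.map_le_iff_le_comap]
      conv_lhs => rw [← hII]
      refine Submodule.map₂_le.2 fun y hy z hz => ?_
      rw [Submodule.mem_comap, LinearMap.mul_apply', LinearMap.mul_apply', ← mul_assoc]
      exact Submodule.apply_mem_map₂ (LinearMap.mul ℂ A) (Submodule.mem_map_of_mem hy) hz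
  have hxe : I.map (LinearMap.mul ℂ A x) = R := hxle.eq_of_not_lt (hRmin _ ⟨hx, hxI⟩)
  obtain ⟨a, -, ha⟩ : x ∈ I.map (LinearMap.mul ℂ A x) := hxe ▸ hxR
  refine exists_idempotent_of_fix (x := x) (a := a) ?_ ha
  rintro rfl
  apply hx
  rw [map_zero, Submodule.map_zero]

end Powers

/-! ### Algebras with a zero power, and extra special algebras -/

section Nilpotent

variable {A : Type*} [NonUnitalRing A] [Module ℂ A] [SMulCommClass ℂ A A] [IsScalarTower ℂ A A]

lemma mem_centerSub {z : A} : z ∈ centerSub A ↔ ∀ a : A, z * a = 0 ∧ a * z = 0 := Iff.rfl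

variable [FiniteDimensional ℂ A]

lemma tInv_eq : tInv A = (finrank ℂ A : ℤ) ^ 2 - finrank ℂ (Cocycles A)
    + finrank ℂ (derivedIdeal A) := by
  rw [tInv, ← multDim_add A]
  push_cast
  ring

/-- A cocycle `f` on a nilpotent algebra is determined by the functionals `f(v, ·)` for `v` in a
complement of `A²`, because the `a` with `f(a, ·) = 0` form a right ideal. -/
lemma finrank_cocycles_le_of_nilpotent {k : ℕ} (hk : idealPow A k = ⊥) :
    finrank ℂ (Cocycles A) ≤ finrank ℂ (A ⧸ derivedIdeal A) * finrank ℂ A := by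
  obtain ⟨V, hV⟩ := (derivedIdeal A).exists_isCompl
  have h := finrank_le_of_ker_le (pullForm V.subtype (LinearMap.id : A →ₗ[ℂ] A)) (Cocycles A)
    ⊥ ⊤ (fun _ _ => trivial) (by
      intro f hf h0
      have hVf : V ≤ f.ker := by
        intro v hv
        ext a
        exact LinearMap.congr_fun (LinearMap.congr_fun h0 ⟨v, hv⟩) a
      have htop : f.ker = ⊤ := by
        refine eq_top_of_sup_derivedIdeal hk _ ?_ ?_
        · intro x hx y
          ext z
          rw [hf x y z, LinearMap.mem_ker.1 hx]
          rfl
        · rw [eq_top_iff, ← hV.sup_eq_top, sup_comm]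
          exact sup_le_sup_right hVf _
      exact LinearMap.ker_eq_top.1 htop)
  have hq := finrank_quot_derived (A := A)
  have hc := Submodule.finrank_add_eq_of_isCompl hV
  have hV' : finrank ℂ V = finrank ℂ (A ⧸ derivedIdeal A) := by omega
  rw [finrank_top, finrank_linearMap, finrank_linearMap, finrank_self, finrank_bot, mul_one,
    hV'] at h
  exact h

lemma finrank_quot_pos_of_nilpotent {k : ℕ} (hk : idealPow A k = ⊥)
    (hd : finrank ℂ (derivedIdeal A) ≠ 0) : 1 ≤ finrank ℂ (A ⧸ derivedIdeal A) := by
  by_contra! h0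
  have hq := finrank_quot_derived (A := A)
  have htop : derivedIdeal A = ⊤ := Submodule.eq_top_of_finrank_eq (by omega)
  have h := eq_top_of_sup_derivedIdeal hk ⊥ (by
    intro x hx y
    rw [Submodule.mem_bot] at hx ⊢
    rw [hx, zero_mul]) (by rw [htop]; exact sup_top_eq _)
  apply hd
  rw [htop, ← h]
  exact finrank_bot ℂ A

/-- In a nilpotent algebra, a one-dimensional derived ideal is central. -/
lemma derivedIdeal_le_center_of_nilpotent {k : ℕ} (hk : idealPow A k = ⊥)
    (hd : finrank ℂ (derivedIdeal A) = 1) : derivedIdeal A ≤ centerSub A := by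
  have h2 : idealPow A 2 = ⊥ := by
    have hle := idealPow_succ_le A 1
    by_cases heq : idealPow A 2 = idealPow A 1
    · have h1 := idealPow_eq_of_stable A heq k
      have h3 := idealPow_one A
      have hanti : Antitone (idealPow A) := antitone_nat_of_succ_le (idealPow_succ_le A)
      have h4 : idealPow A (1 + k) ≤ ⊥ := hk ▸ hanti (Nat.le_add_left k 1)
      rw [h1, h3, le_bot_iff] at h4
      rw [h4, finrank_bot] at hd
      omega
    · have hlt := Submodule.finrank_lt_finrank_of_lt (lt_of_le_of_ne hle heq)
      rw [idealPow_one, hd] at hlt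
      change finrank ℂ (idealPow A 2) < 1 at hlt
      exact Submodule.finrank_eq_zero.1 (by omega)
  have h3 : ∀ x ∈ derivedIdeal A, ∀ y, x * y = 0 := by
    intro x hx y
    rw [← Submodule.mem_bot ℂ, ← h2]
    rw [← idealPow_one] at hx
    exact Submodule.apply_mem_map₂ (LinearMap.mul ℂ A) hx (Submodule.mem_top (x := y))
  refine Submodule.span_le.2 ?_
  rintro _ ⟨x, y, rfl⟩ a
  refine ⟨h3 _ (mul_mem_derivedIdeal x y) a, ?_⟩
  rw [← mul_assoc]
  exact h3 _ (mul_mem_derivedIdeal a x) y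

/-- The nilpotent case of the implication from `t(A) = 6`. -/
lemma extraSpecial_of_tInv_eq_six {k : ℕ} (hk : idealPow A k = ⊥) (ht : tInv A = 6) :
    IsExtraSpecialAlg A ∧ finrank ℂ A = 3 := by
  rw [tInv_eq] at ht
  have hq := finrank_quot_derived (A := A)
  have hlow := sq_le_finrank_cocycles (A := A)
  have hup := finrank_cocycles_le_of_nilpotent hk
  have hV := finrank_vanishForms (derivedIdeal A)
  have hpos := finrank_quot_pos_of_nilpotent hk
  have hone := finrank_cocycles_le_of_one (A := A)
  generalize hqd : finrank ℂ (A ⧸ derivedIdeal A) = q at *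
  generalize hdd : finrank ℂ (derivedIdeal A) = d at *
  generalize hnd : finrank ℂ A = n at *
  generalize hZd : finrank ℂ (Cocycles A) = Z at *
  zify at hq hlow hup
  have hd0 : d ≠ 0 := by
    rintro rfl
    push_cast at *
    nlinarith
  have hqpos := hpos hd0
  have hd2 : d < 2 := by
    by_contra! h2
    zify at h2 hqpos
    nlinarith
  have hd : d = 1 := by omega
  subst hd
  have hone := hone rfl
  zify at hone
  have hq2 : q = 2 := by
    push_cast at *
    have h1 : (q : ℤ) ≤ 2 := by nlinarith
    have h2 : (2 : ℤ) ≤ q := by nlinarith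
    omega
  subst hq2
  have hn : n = 3 := by push_cast at hq; omega
  subst hn
  have hZ4 : Z = 4 := by push_cast at ht; omega
  refine ⟨?_, rfl⟩
  have hZV : vanishForms (derivedIdeal A) = Cocycles A :=
    Submodule.eq_of_le_of_finrank_eq vanishForms_le_cocycles (by rw [hV, hZd, hZ4])
  have hle := derivedIdeal_le_center_of_nilpotent hk hdd
  suffices h : centerSub A = derivedIdeal A from ⟨h, h ▸ hdd⟩
  by_contra hne
  -- otherwise the center is the kernel of a functional `g`, and `a b = (g(a) g(b) / g(y₀)²) y₀²`
  have hlt := Submodule.finrank_lt_finrank_of_lt (lt_of_le_of_ne hle (Ne.symm hne))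
  obtain ⟨y₀, w₀, h0, -⟩ := exists_generator hdd
  have hy : y₀ ∉ centerSub A := fun h => h0 (h w₀).1
  obtain ⟨g, hg, hgZ⟩ := Submodule.exists_le_ker_of_notMem hy
  have hgr : finrank ℂ g.ker = 2 := by
    have h1 := g.finrank_range_add_finrank_ker
    have h2 : g.range = ⊤ := LinearMap.range_eq_top.2
      (LinearMap.surjective (by rintro rfl; exact hg rfl))
    rw [h2, finrank_top, finrank_self] at h1
    omega
  have hker : centerSub A = g.ker :=
    Submodule.eq_of_le_of_finrank_le hgZ (by omega)
  have hdec : ∀ a, ∃ z ∈ centerSub A, a = z + (g a / g y₀) • y₀ := by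
    intro a
    refine ⟨a - (g a / g y₀) • y₀, ?_, by abel⟩
    rw [hker, LinearMap.mem_ker, map_sub, map_smul, smul_eq_mul, div_mul_cancel₀ _ hg, sub_self]
  have hmul : ∀ a b, a * b = ((g a / g y₀) * (g b / g y₀)) • (y₀ * y₀) := by
    intro a b
    obtain ⟨z, hz, ha⟩ := hdec a
    obtain ⟨z', hz', hb⟩ := hdec b
    conv_lhs => rw [ha, hb]
    rw [add_mul, (hz _).1, zero_add, mul_add, (hz' _).2, zero_add, smul_mul_smul_comm]
  have hyy : y₀ * y₀ ≠ 0 := by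
    intro h
    apply h0
    rw [hmul, h, smul_zero]
  obtain ⟨r, hr, -⟩ := Submodule.exists_le_ker_of_notMem
    (show y₀ * y₀ ∉ (⊥ : Submodule ℂ A) from hyy)
  have hgd : ∀ a b, g (a * b) = 0 := fun a b => hgZ (hle (mul_mem_derivedIdeal a b))
  -- the symmetrised product of `r` and `g` is a cocycle that does not vanish on `A²`
  let f : A →ₗ[ℂ] A →ₗ[ℂ] ℂ := r.smulRight g + g.smulRight r
  have hfa : ∀ a b, f a b = r a * g b + g a * r b := fun a b => rfl
  have hf : f ∈ Cocycles A := by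
    intro x y z
    rw [hfa, hfa, hgd, hgd, hmul x y, hmul y z, map_smul, map_smul, smul_eq_mul, smul_eq_mul]
    ring
  rw [← hZV] at hf
  have h1 := (hf _ (mul_mem_derivedIdeal y₀ y₀) y₀).1
  rw [hfa, hgd, zero_mul, add_zero] at h1
  exact mul_ne_zero hr hg h1

/-- The cocycles of a three-dimensional extra special algebra are the pullbacks of the
bilinear forms on `A / A²`; any other cocycle would make the kernel of `f(·, y₀w₀)` a
two-dimensional subspace of the center. -/
lemma tInv_eq_six_of_extraSpecial (h : IsExtraSpecialAlg A) (hn : finrank ℂ A = 3) :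
    tInv A = 6 := by
  obtain ⟨hZ, hdim⟩ := h
  have hd : finrank ℂ (derivedIdeal A) = 1 := hZ ▸ hdim
  have hq := finrank_quot_derived (A := A)
  have hV := finrank_vanishForms (derivedIdeal A)
  obtain ⟨y₀, w₀, h0, hz⟩ := exists_generator hd
  have hle : Cocycles A ≤ vanishForms (derivedIdeal A) := by
    intro f hf
    by_contra hcon
    have hp : f (y₀ * w₀) w₀ ≠ 0 := fun h => hcon (mem_vanishForms_of_apply_eq_zero hz hf h)
    have hβ : ∀ x y, ∃ c : ℂ, x * y = c • (y₀ * w₀) := fun x y => hz _ (mul_mem_derivedIdeal x y)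
    choose β hβ using hβ
    have key : ∀ x y w, β x y * f (y₀ * w₀) w = β y w * f x (y₀ * w₀) := by
      intro x y w
      have := hf x y w
      rw [hβ x y, hβ y w, map_smul, LinearMap.smul_apply, map_smul] at this
      exact this
    have hker : (f.flip (y₀ * w₀)).ker ≤ centerSub A := by
      intro u hu
      have hu' : f u (y₀ * w₀) = 0 := hu
      have h1 : ∀ y, β u y = 0 := fun y => by
        have := key u y w₀
        rw [hu', mul_zero] at this
        exact (mul_eq_zero.1 this).resolve_right hp
      have h2 : ∀ y, β y u = 0 := fun y => by
        have := key y u w₀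
        rw [h1, zero_mul] at this
        exact (mul_eq_zero.1 this).resolve_right hp
      intro a
      rw [hβ u a, hβ a u, h1, h2, zero_smul]
      exact ⟨rfl, rfl⟩
    have h1 := (f.flip (y₀ * w₀)).finrank_range_add_finrank_ker
    have h2 := Submodule.finrank_mono hker
    have h3 := (f.flip (y₀ * w₀)).range.finrank_le
    rw [finrank_self] at h3
    omega
  have heq : finrank ℂ (Cocycles A) = 4 := by
    rw [le_antisymm hle vanishForms_le_cocycles, hV]
    have : finrank ℂ (A ⧸ derivedIdeal A) = 2 := by omega
    rw [this]
  rw [tInv_eq, heq, hn, hd]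
  norm_num

end Nilpotent

/-! ### Algebras with a nonzero idempotent -/

section Idempotent

variable {A : Type*} [NonUnitalRing A] [Module ℂ A] [SMulCommClass ℂ A A] [IsScalarTower ℂ A A]

/-- The elements `x` with `x e = 0`. -/
def leftAnn (e : A) : Submodule ℂ A := ((LinearMap.mul ℂ A).flip e).ker

/-- The elements `x` with `e x = 0`. -/
def rightAnn (e : A) : Submodule ℂ A := (LinearMap.mul ℂ A e).ker

/-- The Peirce component of the `x` with `e x = 0` and `x e = x`. -/
def peirceZeroOne (e : A) : Submodule ℂ A :=
  rightAnn e ⊓ ((LinearMap.mul ℂ A).flip e - LinearMap.id).ker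

/-- The Peirce component of the `x` with `x e = 0` and `e x = x`. -/
def peirceOneZero (e : A) : Submodule ℂ A :=
  leftAnn e ⊓ (LinearMap.mul ℂ A e - LinearMap.id).ker

lemma mem_leftAnn {e x : A} : x ∈ leftAnn e ↔ x * e = 0 := Iff.rfl

lemma mem_rightAnn {e x : A} : x ∈ rightAnn e ↔ e * x = 0 := Iff.rfl

lemma mem_peirceZeroOne {e x : A} : x ∈ peirceZeroOne e ↔ e * x = 0 ∧ x * e = x := by
  rw [peirceZeroOne, Submodule.mem_inf, mem_rightAnn, LinearMap.mem_ker, LinearMap.sub_apply,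
    sub_eq_zero]
  rfl

lemma mem_peirceOneZero {e x : A} : x ∈ peirceOneZero e ↔ x * e = 0 ∧ e * x = x := by
  rw [peirceOneZero, Submodule.mem_inf, mem_leftAnn, LinearMap.mem_ker, LinearMap.sub_apply,
    sub_eq_zero]
  rfl

/-- The Peirce component of the `x` with `x e = e x = 0`, as a subalgebra. -/
def corner (e : A) : NonUnitalSubalgebra ℂ A where
  __ := leftAnn e ⊓ rightAnn e
  mul_mem' := by
    rintro x y ⟨-, hx⟩ ⟨hy, -⟩
    refine ⟨?_, ?_⟩
    · change x * y * e = 0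
      rw [mul_assoc, mem_leftAnn.1 hy, mul_zero]
    · change e * (x * y) = 0
      rw [← mul_assoc, mem_rightAnn.1 hx, zero_mul]

lemma mem_corner {e x : A} : x ∈ corner e ↔ x * e = 0 ∧ e * x = 0 := Iff.rfl

variable [FiniteDimensional ℂ A]

instance (C : NonUnitalSubalgebra ℂ A) : FiniteDimensional ℂ C :=
  inferInstanceAs (FiniteDimensional ℂ C.toSubmodule)

/-- Modulo coboundaries, a cocycle is determined by its restrictions to
`A(1-e) × (1-e)A` and to `(1-e)Ae × eA(1-e)`. -/
lemma multDim_le_of_idempotent {e : A} (he : e * e = e) :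
    multDim A ≤ finrank ℂ (leftAnn e) * finrank ℂ (rightAnn e) +
      finrank ℂ (peirceZeroOne e) * finrank ℂ (peirceOneZero e) := by
  have h := multDim_le
    ((pullForm (leftAnn e).subtype (rightAnn e).subtype).prod
      (pullForm (peirceZeroOne e).subtype (peirceOneZero e).subtype)) ⊤ (fun _ _ => trivial) (by
      intro f hf h0
      have h1 : ∀ x y, x * e = 0 → e * y = 0 → f x y = 0 := fun x y hx hy =>
        LinearMap.congr_fun (LinearMap.congr_fun (congrArg Prod.fst h0) ⟨x, hx⟩) ⟨y, hy⟩
      have h2 : ∀ x y, e * x = 0 → x * e = x → y * e = 0 → e * y = y → f x y = 0 :=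
        fun x y hx hx' hy hy' => LinearMap.congr_fun (LinearMap.congr_fun (congrArg Prod.snd h0)
          ⟨x, mem_peirceZeroOne.2 ⟨hx, hx'⟩⟩) ⟨y, mem_peirceOneZero.2 ⟨hy, hy'⟩⟩
      have hee : ∀ y, e * (e * y) = e * y := fun y => by rw [← mul_assoc, he]
      have hee' : ∀ y, y * e * e = y * e := fun y => by rw [mul_assoc, he]
      -- a cocycle annihilates `Ae × (1-e)A` and `A(1-e) × eA`
      have h3 : ∀ x y, f (x * e) y = f (x * e) (e * y) := fun x y => by
        rw [hf, hf, hee]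
      have h4 : ∀ x y, f x (e * y) = f (x * e) (e * y) := fun x y => by
        rw [← hf, ← hf, hee']
      have h5 : ∀ x y, f x y = f (x * e) (e * y) := fun x y => by
        have := h1 (x - x * e) (y - e * y) (by rw [sub_mul, hee', sub_self])
          (by rw [mul_sub, hee, sub_self])
        simp only [map_sub, LinearMap.sub_apply] at this
        linear_combination this + h3 x y + h4 x y
      let ℓ : A →ₗ[ℂ] ℂ := f e + (f.flip e) ∘ₗ (LinearMap.id - LinearMap.mul ℂ A e)
      refine ⟨ℓ, fun x y => ?_⟩
      have hℓ : ∀ w, ℓ w = f e w + f (w - e * w) e := fun w => rfl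
      have h6 : f (x * e - e * (x * e)) (e * y - e * y * e) = 0 := by
        apply h2
        · rw [mul_sub, hee, sub_self]
        · rw [sub_mul, hee', mul_assoc e, hee']
        · rw [sub_mul, hee', sub_self]
        · rw [mul_sub, hee, ← mul_assoc, hee]
      have a1 : f e (x * y) = f (e * (x * e)) (e * y) := by rw [← hf, h5, mul_assoc]
      have a2 : f (x * y) e = f (x * e) (e * y * e) := by rw [hf, h5, ← mul_assoc]
      have a3 : f (e * (x * y)) e = f (e * (x * e)) (e * y * e) := by
        rw [← mul_assoc, hf, h5, mul_assoc e x, ← mul_assoc e y]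
      rw [hℓ]
      simp only [map_sub, LinearMap.sub_apply] at h6 ⊢
      linear_combination h5 x y + h6 - a1 - a2 + a3)
  rw [finrank_top, finrank_prod, finrank_linearMap, finrank_linearMap, finrank_linearMap,
    finrank_linearMap, finrank_self, mul_one, mul_one] at h
  exact h

/-- The linear relations between the dimensions of the Peirce components. -/
lemma peirce_dims {e : A} (he : e * e = e) (he0 : e ≠ 0) :
    finrank ℂ (peirceOneZero e) + finrank ℂ (corner e) ≤ finrank ℂ (leftAnn e) ∧
    finrank ℂ (peirceZeroOne e) + finrank ℂ (corner e) ≤ finrank ℂ (rightAnn e) ∧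
    finrank ℂ (leftAnn e) + finrank ℂ (rightAnn e) + 1 ≤ finrank ℂ A + finrank ℂ (corner e) := by
  have hc : finrank ℂ (corner e) = finrank ℂ (leftAnn e ⊓ rightAnn e : Submodule ℂ A) := rfl
  rw [hc]
  refine ⟨?_, ?_, ?_⟩
  · rw [← Submodule.finrank_sup_add_finrank_inf_eq]
    have h1 : peirceOneZero e ⊓ (leftAnn e ⊓ rightAnn e) = ⊥ := by
      rw [eq_bot_iff]
      rintro x ⟨hx, -, hx'⟩
      exact (mem_peirceOneZero.1 hx).2.symm.trans (mem_rightAnn.1 hx')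
    rw [h1, finrank_bot, add_zero]
    exact Submodule.finrank_mono (sup_le inf_le_left inf_le_left)
  · rw [← Submodule.finrank_sup_add_finrank_inf_eq]
    have h1 : peirceZeroOne e ⊓ (leftAnn e ⊓ rightAnn e) = ⊥ := by
      rw [eq_bot_iff]
      rintro x ⟨hx, hx', -⟩
      exact (mem_peirceZeroOne.1 hx).2.symm.trans (mem_leftAnn.1 hx')
    rw [h1, finrank_bot, add_zero]
    exact Submodule.finrank_mono (sup_le inf_le_left inf_le_right)
  · have h1 := Submodule.finrank_sup_add_finrank_inf_eq (leftAnn e) (rightAnn e)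
    have h2 : leftAnn e ⊔ rightAnn e < ⊤ := by
      rw [lt_top_iff_ne_top]
      intro htop
      apply he0
      -- `e x e = 0` on both annihilators, but `e e e = e`
      have hle : leftAnn e ⊔ rightAnn e ≤
          ((LinearMap.mul ℂ A).flip e ∘ₗ LinearMap.mul ℂ A e).ker := by
        refine sup_le (fun x hx => ?_) (fun x hx => ?_)
        · change e * x * e = 0
          rw [mul_assoc, mem_leftAnn.1 hx, mul_zero]
        · change e * x * e = 0
          rw [mem_rightAnn.1 hx, zero_mul]
      rw [htop] at hle
      have : e * e * e = 0 := hle (Submodule.mem_top (x := e))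
      rwa [he, he] at this
    have h3 := Submodule.finrank_lt h2.ne
    omega

/-- In the presence of a nonzero idempotent, `dim M(A) ≤ (dim A - 1)²`, stated as a lower bound
for `t(A)`; in dimension three, `dim M(A) = 3` forces the idempotent to be central with a
two-dimensional complement. -/
lemma multDim_bounds {e : A} (he : e * e = e) (he0 : e ≠ 0) :
    2 * (finrank ℂ A : ℤ) - 1 ≤ tInv A ∧
    (finrank ℂ A = 3 → multDim A = 3 →
      finrank ℂ (corner e) = 2 ∧ finrank ℂ (leftAnn e) = 2 ∧ finrank ℂ (rightAnn e) = 2) := by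
  have hM := multDim_le_of_idempotent he
  obtain ⟨h1, h2, h3⟩ := peirce_dims he he0
  rw [tInv]
  generalize finrank ℂ (corner e) = c at *
  generalize finrank ℂ (leftAnn e) = r at *
  generalize finrank ℂ (rightAnn e) = l at *
  generalize finrank ℂ (peirceOneZero e) = a at *
  generalize finrank ℂ (peirceZeroOne e) = b at *
  generalize finrank ℂ A = n at *
  generalize multDim A = M at *
  obtain ⟨a', rfl⟩ : ∃ a', r = a' + c := ⟨r - c, by omega⟩
  obtain ⟨b', rfl⟩ : ∃ b', l = b' + c := ⟨l - c, by omega⟩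
  have ha : a ≤ a' := by omega
  have hb : b ≤ b' := by omega
  have hn : a' + b' + c + 1 ≤ n := by omega
  have hM' : M ≤ (a' + c) * (b' + c) + b' * a' := hM.trans (by gcongr)
  constructor
  · have hsq : (a' + b' + c + 1) * (a' + b' + c + 1) ≤ n * n := Nat.mul_le_mul hn hn
    obtain ⟨m, rfl⟩ : ∃ m, n = m + 1 := ⟨n - 1, by omega⟩
    have hm : a' + b' + c ≤ m := by omega
    have hsq : (a' + b' + c) * (a' + b' + c) ≤ m * m := Nat.mul_le_mul hm hm
    have : M ≤ m * m := by
      nlinarith [Nat.zero_le (a' * c), Nat.zero_le (b' * c), Nat.zero_le (a' * b'),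
        Nat.zero_le (a' * a'), Nat.zero_le (b' * b')]
    zify at this
    push_cast
    nlinarith
  · rintro rfl rfl
    have ha3 : a' ≤ 2 := by omega
    have hb3 : b' ≤ 2 := by omega
    have hc3 : c ≤ 2 := by omega
    interval_cases a' <;> interval_cases b' <;> interval_cases c <;> omega

/-- A two-dimensional algebra with nonzero multiplication has `t(A) ≥ 3`. -/
lemma three_le_tInv (hn : finrank ℂ A = 2) (hd : finrank ℂ (derivedIdeal A) ≠ 0) :
    3 ≤ tInv A := by
  rcases nilpotent_or_idempotent (A := A) with ⟨k, hk⟩ | ⟨e, he0, he⟩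
  · have h1 := finrank_cocycles_le_of_nilpotent hk
    have h2 := finrank_quot_derived (A := A)
    have h3 := finrank_quot_pos_of_nilpotent hk hd
    have hq : finrank ℂ (A ⧸ derivedIdeal A) = 1 := by omega
    rw [tInv_eq]
    rw [hq, hn] at h1
    rw [hn]
    zify at h1
    have h4 : finrank ℂ (derivedIdeal A) = 1 := by omega
    rw [h4]
    push_cast
    linarith
  · have := (multDim_bounds he he0).1
    rw [hn] at this
    push_cast at this
    linarith

/-- If `e` is a central idempotent, restriction to the corner `(1-e)A` is injective on classes of
cocycles, because `ℂ`-valued cocycles on the unital algebra `eA` are coboundaries. -/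
lemma multDim_le_corner {e : A} (he : e * e = e) (hcomm : ∀ x, x * e = e * x) :
    multDim A ≤ multDim (corner e) := by
  let C := corner e
  let ι : C →ₗ[ℂ] A := C.toSubmodule.subtype
  refine multDim_le ((Coboundaries C).mkQ ∘ₗ pullForm ι ι) _ ?_ ?_
  · intro f hf
    exact ⟨pullForm ι ι f, fun x y z => hf x y z, rfl⟩
  · intro f hf h0
    obtain ⟨g, hg⟩ : pullForm ι ι f ∈ Coboundaries C := (Submodule.Quotient.mk_eq_zero _).1 h0
    have hmem : ∀ w, w - w * e ∈ C := fun w => by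
      refine mem_corner.2 ⟨?_, ?_⟩
      · rw [sub_mul, mul_assoc, he, sub_self]
      · rw [mul_sub, ← mul_assoc, ← hcomm w, mul_assoc, he, sub_self]
    let π : A →ₗ[ℂ] C := (LinearMap.id - (LinearMap.mul ℂ A).flip e).codRestrict
      C.toSubmodule hmem
    have hπ : ∀ w, (π w : A) = w - w * e := fun w => rfl
    have hπmul : ∀ x y, π x * π y = π (x * y) := by
      intro x y
      apply Subtype.ext
      change (π x : A) * (π y : A) = (π (x * y) : A)
      rw [hπ, hπ, hπ, sub_mul, mul_assoc x e, mul_sub e, ← mul_assoc e y e, ← hcomm y,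
        mul_assoc y e e, he, sub_self, mul_zero, sub_zero, mul_sub, mul_assoc]
    refine ⟨f e ∘ₗ (LinearMap.mul ℂ A).flip e + g ∘ₗ π, fun x y => ?_⟩
    have hG : (f e ∘ₗ (LinearMap.mul ℂ A).flip e + g ∘ₗ π) (x * y) =
      f e (x * y * e) + g (π (x * y)) := rfl
    have h1 : f (π x) (π y) = g (π x * π y) := hg (π x) (π y)
    rw [hπmul, hπ, hπ] at h1
    have h2 : f (x * e) y = f e (x * y * e) := by
      rw [hcomm x, hcomm (x * y), ← hf e e, he, hf]
    have h4 : f (x * e) (y * e) = f e (x * y * e) := by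
      rw [hcomm, hf, mul_assoc]
    have h3 : f x (y * e) = f e (x * y * e) := by
      rw [← h4, hf, ← hcomm (y * e), mul_assoc, he]
    rw [hG]
    simp only [map_sub, LinearMap.sub_apply] at h1
    linear_combination h1 + h2 + h3 - h4

/-- An algebra with a nonzero idempotent never has `t(A) = 6`: the bounds on `dim M(A)` leave only
`A = ℂe ⊕ C` with `dim C = 2`, where `dim M(A) = 3` fails. -/
lemma tInv_ne_six_of_idempotent {e : A} (he : e * e = e) (he0 : e ≠ 0) : tInv A ≠ 6 := by
  intro ht
  obtain ⟨h1, h2⟩ := multDim_bounds he he0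
  have hM0 : tInv A = (finrank ℂ A : ℤ) ^ 2 - multDim A := rfl
  have hn3 : finrank ℂ A = 3 := by
    have h3 : finrank ℂ A ≤ 3 := by omega
    rw [ht] at hM0
    generalize finrank ℂ A = n at *
    interval_cases n <;> omega
  have hM : multDim A = 3 := by
    rw [hn3] at hM0
    push_cast at hM0
    omega
  obtain ⟨hc, hl, hr⟩ := h2 hn3 hM
  have hcl : (corner e).toSubmodule = leftAnn e :=
    Submodule.eq_of_le_of_finrank_eq inf_le_left (hc.trans hl.symm)
  have hcr : (corner e).toSubmodule = rightAnn e :=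
    Submodule.eq_of_le_of_finrank_eq inf_le_right (hc.trans hr.symm)
  have hcomm : ∀ x, x * e = e * x := by
    intro x
    have hx1 : x - x * e ∈ (corner e).toSubmodule := by
      rw [hcl, mem_leftAnn, sub_mul, mul_assoc, he, sub_self]
    have hx2 : x - e * x ∈ (corner e).toSubmodule := by
      rw [hcr, mem_rightAnn, mul_sub, ← mul_assoc, he, sub_self]
    have h3 := (mem_corner.1 hx1).2
    have h4 := (mem_corner.1 hx2).1
    rw [mul_sub, sub_eq_zero] at h3
    rw [sub_mul, sub_eq_zero] at h4
    exact h4.trans ((mul_assoc e x e).trans h3.symm)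
  by_cases hd : finrank ℂ (derivedIdeal (corner e)) = 0
  · -- `A = ℂe ⊕ C` with `C² = 0`: here `M(A)` has dimension at least four
    have hCC : ∀ x ∈ corner e, ∀ y ∈ corner e, x * y = 0 := by
      intro x hx y hy
      have h3 : (⟨x, hx⟩ * ⟨y, hy⟩ : corner e) ∈ derivedIdeal (corner e) :=
        mul_mem_derivedIdeal _ _
      rw [Submodule.finrank_eq_zero.1 hd, Submodule.mem_bot] at h3
      exact congrArg Subtype.val h3
    have he1 : finrank ℂ (Submodule.span ℂ {e}) = 1 := finrank_span_singleton he0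
    have hsup : (corner e).toSubmodule ⊔ Submodule.span ℂ {e} = ⊤ := by
      apply Submodule.eq_top_of_finrank_eq
      have h3 := Submodule.finrank_sup_add_finrank_inf_eq (corner e).toSubmodule
        (Submodule.span ℂ {e})
      have h4 : (corner e).toSubmodule ⊓ Submodule.span ℂ {e} = ⊥ := by
        rw [eq_bot_iff]
        rintro x ⟨hx, hx'⟩
        obtain ⟨c, rfl⟩ := Submodule.mem_span_singleton.1 hx'
        have := (mem_corner.1 hx).1
        rw [smul_mul_assoc, he] at this
        exact this
      have hc' : finrank ℂ (corner e).toSubmodule = 2 := hc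
      rw [h4, finrank_bot, he1, hc'] at h3
      omega
    have hdec : ∀ x, ∃ y ∈ corner e, ∃ c : ℂ, x = y + c • e := by
      intro x
      obtain ⟨y, hy, z, hz, rfl⟩ := Submodule.mem_sup.1 (hsup ▸ Submodule.mem_top (x := x))
      obtain ⟨c, rfl⟩ := Submodule.mem_span_singleton.1 hz
      exact ⟨y, hy, c, rfl⟩
    have hder : derivedIdeal A = Submodule.span ℂ {e} := by
      apply le_antisymm
      · refine Submodule.span_le.2 ?_
        rintro _ ⟨x, y, rfl⟩
        obtain ⟨x', hx, c, rfl⟩ := hdec x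
        obtain ⟨y', hy, c', rfl⟩ := hdec y
        refine Submodule.mem_span_singleton.2 ⟨c * c', ?_⟩
        rw [add_mul, mul_add, mul_add, hCC x' hx y' hy, mul_smul_comm, (mem_corner.1 hx).1,
          smul_mul_assoc, (mem_corner.1 hy).2, smul_mul_smul_comm, he]
        simp
      · rw [Submodule.span_singleton_le_iff_mem, ← he]
        exact mul_mem_derivedIdeal e e
    obtain ⟨g, hg, -⟩ := Submodule.exists_le_ker_of_notMem
      (show e ∉ (⊥ : Submodule ℂ A) from he0)
    have hlt : vanishForms (derivedIdeal A) < Cocycles A := by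
      refine lt_of_le_of_ne vanishForms_le_cocycles fun heq => hg ?_
      have h3 : (LinearMap.mul ℂ A).compr₂ g ∈ Cocycles A :=
        coboundaries_le_cocycles ⟨g, fun x y => rfl⟩
      rw [← heq] at h3
      have h4 : g (e * e) = 0 :=
        (h3 e (hder ▸ Submodule.mem_span_singleton_self e) e).1
      rwa [he] at h4
    have h3 := Submodule.finrank_lt_finrank_of_lt hlt
    have h4 := multDim_add A
    have h5 := finrank_quot_derived (A := A)
    have h6 : finrank ℂ (derivedIdeal A) = 1 := by rw [hder, he1]
    have h7 : finrank ℂ (A ⧸ derivedIdeal A) = 2 := by omega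
    rw [finrank_vanishForms, h7] at h3
    omega
  · have h3 := three_le_tInv hc hd
    have h4 := multDim_le_corner he hcomm
    rw [tInv, hc] at h3
    push_cast at h3
    omega

end Idempotent

/-- For a finite-dimensional nilpotent associative ℂ-algebra `A`,
`t(A) = 6` iff `A` is extra special of dimension 3. -/
theorem tInv_eq_six_iff (A : Type*) [NonUnitalRing A] [Module ℂ A] [SMulCommClass ℂ A A] [IsScalarTower ℂ A A]
    [FiniteDimensional ℂ A] (hnil : IsNilpotentAlgebra A) :
    tInv A = 6 ↔ (IsExtraSpecialAlg A ∧ Module.finrank ℂ A = 3) := by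
  constructor
  · intro ht
    rcases nilpotent_or_idempotent (A := A) with ⟨k, hk⟩ | ⟨e, he0, he⟩
    · exact extraSpecial_of_tInv_eq_six hk ht
    · exact absurd ht (tInv_ne_six_of_idempotent he he0)
  · rintro ⟨h, hn⟩
    exact tInv_eq_six_of_extraSpecial h hn
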